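/- Let F : ℝ^m → ℝ be L-smooth and set L' = L + 1. Let (z_k) be generated by z_{k+1} = z_k + t_k s_k with ‖g_k − ∇F(z_k)‖₂ ≤ δ_k, c₁‖g_k‖₂² ≤ −g_kᵀ s_k, ‖s_k‖₂ ≤ c₂‖g_k‖₂, and δ_k ≤ β‖g_k‖₂ for some β ∈ [0, c₁/(c₂√L')). With Δ = c₁² − L' c₂² β², t̄₁ = (c₁ − √Δ)/(c₂² L'), t̄₂ = (c₁ + √Δ)/(c₂² L'), suppose γ ∈ (0, (t̄₂ − t̄₁)/2] and t_k ∈ [t̄₁ + γ, t̄₂ − γ] for all k. Then for every k, F(z_{k+1}) ≤ F(z_k) − (L' c₂² γ²/2)‖g_k‖₂²; in particular the sequence (F(z_k)) is monotonically nonincreasing. -/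

import Mathlib

open scoped RealInnerProductSpace

theorem descent_aux {E : Type*} [NormedAddCommGroup E] [InnerProductSpace ℝ E] [CompleteSpace E]
    (F : E → ℝ) (L : ℝ) (hdiff : Differentiable ℝ F)
    (hlip : ∀ x y : E, ‖gradient F x - gradient F y‖ ≤ L * ‖x - y‖) (x d : E) :
    F (x + d) ≤ F x + ⟪gradient F x, d⟫ + L / 2 * ‖d‖ ^ 2 := by
  have hd : ∀ τ : ℝ, HasDerivAt
      (fun τ : ℝ => F (x + τ • d) - τ * ⟪gradient F x, d⟫ - L / 2 * ‖d‖ ^ 2 * τ ^ 2)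
      (⟪gradient F (x + τ • d), d⟫ - ⟪gradient F x, d⟫ - L / 2 * ‖d‖ ^ 2 * (2 * τ)) τ := by
    intro τ
    have h1 : HasDerivAt (fun τ : ℝ => x + τ • d) d τ := by
      simpa using ((hasDerivAt_id τ).smul_const d).const_add x
    have h2 := (hdiff (x + τ • d)).hasGradientAt.hasFDerivAt.comp_hasDerivAt τ h1
    have h3 := (hasDerivAt_id τ).mul_const ⟪gradient F x, d⟫
    have h4 := ((hasDerivAt_id τ).pow 2).const_mul (L / 2 * ‖d‖ ^ 2)
    refine ((h2.sub h3).sub h4).congr_deriv ?_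
    simp
  have ha := antitoneOn_of_deriv_nonpos (convex_Icc (0 : ℝ) 1)
    (fun τ _ => (hd τ).continuousAt.continuousWithinAt)
    (fun τ _ => (hd τ).differentiableAt.differentiableWithinAt)
    (fun τ hτ => by
      rw [interior_Icc] at hτ
      rw [(hd τ).deriv, ← inner_sub_left]
      have h1 := real_inner_le_norm (gradient F (x + τ • d) - gradient F x) d
      have h2 := hlip (x + τ • d) x
      rw [add_sub_cancel_left, norm_smul, Real.norm_of_nonneg hτ.1.le] at h2
      have h3 := mul_le_mul_of_nonneg_right h2 (norm_nonneg d)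
      nlinarith)
  have := ha (Set.left_mem_Icc.2 zero_le_one) (Set.right_mem_Icc.2 zero_le_one) zero_le_one
  simp only [one_smul, zero_smul, add_zero] at this
  linarith

/-- monotonic descent for step sizes inside the admissible interval. -/
theorem stmt_5 (m : ℕ) (F : EuclideanSpace ℝ (Fin m) → ℝ) (L L' : ℝ)
    (hdiff : Differentiable ℝ F)
    (hlip : ∀ x y : EuclideanSpace ℝ (Fin m), ‖gradient F x - gradient F y‖ ≤ L * ‖x - y‖)
    (hL' : L' = L + 1)
    (z s g : ℕ → EuclideanSpace ℝ (Fin m)) (t δ : ℕ → ℝ)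
    (c₁ c₂ : ℝ) (hc₁ : 0 < c₁) (hc₂ : 0 < c₂)
    (hδ : ∀ k, 0 ≤ δ k)
    (hupd : ∀ k, z (k + 1) = z k + t k • s k)
    (herr : ∀ k, ‖g k - gradient F (z k)‖ ≤ δ k)
    (hdesc : ∀ k, c₁ * ‖g k‖ ^ 2 ≤ -⟪g k, s k⟫)
    (hbnd : ∀ k, ‖s k‖ ≤ c₂ * ‖g k‖)
    (β : ℝ) (hβ0 : 0 ≤ β) (hβ1 : β < c₁ / (c₂ * Real.sqrt L'))
    (hδβ : ∀ k, δ k ≤ β * ‖g k‖)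
    (Δ t₁ t₂ : ℝ)
    (hΔ : Δ = c₁ ^ 2 - L' * c₂ ^ 2 * β ^ 2)
    (ht₁ : t₁ = (c₁ - Real.sqrt Δ) / (c₂ ^ 2 * L'))
    (ht₂ : t₂ = (c₁ + Real.sqrt Δ) / (c₂ ^ 2 * L'))
    (γ : ℝ) (hγ0 : 0 < γ) (hγ1 : γ ≤ (t₂ - t₁) / 2)
    (htk : ∀ k, t k ∈ Set.Icc (t₁ + γ) (t₂ - γ)) :
    (∀ k, F (z (k + 1)) ≤ F (z k) - (L' * c₂ ^ 2 * γ ^ 2 / 2) * ‖g k‖ ^ 2) ∧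
      (∀ k, F (z (k + 1)) ≤ F (z k)) := by
  have hL0 : 0 < L' := by
    by_contra h
    rw [Real.sqrt_eq_zero_of_nonpos (not_lt.1 h)] at hβ1
    simp at hβ1
    linarith
  have hA : 0 < c₂ ^ 2 * L' := by positivity
  have hlt : t₁ < t₂ := by linarith
  have hs : 0 < Real.sqrt Δ := by
    rw [ht₁, ht₂, div_lt_div_iff_of_pos_right hA] at hlt
    linarith
  have hΔ0 : 0 < Δ := Real.sqrt_pos.1 hs
  have hsq : Real.sqrt Δ ^ 2 = Δ := Real.sq_sqrt hΔ0.le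
  have hsc : Real.sqrt Δ ≤ c₁ := by
    apply Real.sqrt_le_iff.2 ⟨hc₁.le, ?_⟩
    rw [hΔ]
    have : 0 ≤ L' * c₂ ^ 2 * β ^ 2 := by positivity
    linarith
  have ht1 : 0 ≤ t₁ := by
    rw [ht₁]
    exact div_nonneg (by linarith) hA.le
  have hsum : c₂ ^ 2 * L' * (t₁ + t₂) = 2 * c₁ := by
    rw [ht₁, ht₂]; field_simp; ring
  have hprod : c₂ ^ 2 * L' * (t₁ * t₂) = β ^ 2 := by
    have h1 : c₂ ^ 2 * L' * t₁ = c₁ - Real.sqrt Δ := by rw [ht₁]; field_simp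
    have h2 : c₂ ^ 2 * L' * t₂ = c₁ + Real.sqrt Δ := by rw [ht₂]; field_simp
    apply mul_left_cancel₀ hA.ne'
    calc c₂ ^ 2 * L' * (c₂ ^ 2 * L' * (t₁ * t₂))
        = (c₂ ^ 2 * L' * t₁) * (c₂ ^ 2 * L' * t₂) := by ring
      _ = c₁ ^ 2 - Real.sqrt Δ ^ 2 := by rw [h1, h2]; ring
      _ = c₂ ^ 2 * L' * β ^ 2 := by rw [hsq, hΔ]; ring
  have main : ∀ k, F (z (k + 1)) ≤ F (z k) - (L' * c₂ ^ 2 * γ ^ 2 / 2) * ‖g k‖ ^ 2 := by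
    intro k
    obtain ⟨hk1, hk2⟩ := htk k
    have ht0 : 0 ≤ t k := by linarith
    have h := descent_aux F L hdiff hlip (z k) (t k • s k)
    rw [← hupd k, inner_smul_right, norm_smul, Real.norm_of_nonneg ht0] at h
    have hi : ⟪gradient F (z k), s k⟫ ≤ -(c₁ * ‖g k‖ ^ 2) + β * ‖g k‖ * ‖s k‖ := by
      have e1 : ⟪gradient F (z k), s k⟫ = ⟪g k, s k⟫ - ⟪g k - gradient F (z k), s k⟫ := by
        rw [inner_sub_left]; ring
      have e2 := (abs_le.1 (abs_real_inner_le_norm (g k - gradient F (z k)) (s k))).1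
      have e3 := mul_le_mul_of_nonneg_right ((herr k).trans (hδβ k)) (norm_nonneg (s k))
      have := hdesc k
      linarith
    have h1 := mul_le_mul_of_nonneg_left hi ht0
    have h2 := sq_nonneg (β * ‖g k‖ - t k * ‖s k‖)
    have h3 : L' / 2 * (t k * ‖s k‖) ^ 2 ≤ L' / 2 * (t k * (c₂ * ‖g k‖)) ^ 2 := by
      have := hbnd k
      gcongr
    have hq : γ ^ 2 ≤ (t k - t₁) * (t₂ - t k) := by
      rw [sq]
      exact mul_le_mul (by linarith) (by linarith) hγ0.le (by linarith)
    have hq2 := mul_le_mul_of_nonneg_left hq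
      (show 0 ≤ c₂ ^ 2 * L' * (‖g k‖ ^ 2 / 2) by positivity)
    have hq3 : c₂ ^ 2 * L' * (‖g k‖ ^ 2 / 2) * ((t k - t₁) * (t₂ - t k)) =
        (‖g k‖ ^ 2 / 2) * (2 * c₁ * t k - β ^ 2 - c₂ ^ 2 * L' * t k ^ 2) := by
      rw [← hsum, ← hprod]; ring
    have hL : L = L' - 1 := by linarith
    rw [hL] at h
    nlinarith
  refine ⟨main, fun k => (main k).trans ?_⟩
  have : 0 ≤ (L' * c₂ ^ 2 * γ ^ 2 / 2) * ‖g k‖ ^ 2 := by positivity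
  linarith
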